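/- For every s ≥ 3 there exists a weak Schur partition of {1, 2, ..., n(s)} into s subsets, where n(3) = 21 and n(s+1) = 3·n(s) - 1 for s ≥ 3. -/

import Mathlib

def WeaklySumFree (S : Finset ℕ) : Prop :=
  ∀ a ∈ S, ∀ b ∈ S, ∀ c ∈ S, a ≠ b → a ≠ c → b ≠ c → a + b ≠ c

def IsWeakSchurPartition (s n : ℕ) (P : Fin s → Finset ℕ) : Prop :=
  (∀ i, (P i).Nonempty) ∧ (∀ i j, i ≠ j → Disjoint (P i) (P j)) ∧
  (Finset.univ.biUnion P = Finset.Icc 1 n) ∧ (∀ i, WeaklySumFree (P i))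

theorem ws_beq (a b : ℕ) : (Nat.beq a b = true) = (a = b) :=
  propext ⟨Nat.eq_of_beq_eq_true, fun h => h ▸ Nat.beq_refl a⟩

def wsL : List ℕ := [0, 0, 0, 1, 0, 1, 1, 1, 0, 2, 2, 0, 2, 2, 2, 2, 2, 1, 0, 1, 2, 1, 3, 0, 3, 3, 3, 3, 3, 3, 3, 3, 3, 3, 3, 0, 3, 3, 3, 3, 3, 3, 3, 3, 0, 3, 1, 1, 1, 0, 2, 2, 2, 2, 2, 2, 2, 2, 2, 0, 1, 1, 1]

def wsCol (x : ℕ) : ℕ := bif Nat.ble x 21 then wsL.getD x 0 else wsL.getD (22 + (x - 22) % 41) 0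

def wsQ (x : ℕ) : ℕ := (x - 22) / 41 + 1

def wsS : ℕ → ℕ
  | 0 => 0
  | k + 1 => 3 * wsS k + 1

theorem wsCol_add (x i : ℕ) (hx : 22 ≤ x) : wsCol (x + 41 * i) = wsCol x := by
  have h1 : Nat.ble x 21 = false := by
    rw [Bool.eq_false_iff]; intro h; have := Nat.le_of_ble_eq_true h; omega
  have h2 : Nat.ble (x + 41 * i) 21 = false := by
    rw [Bool.eq_false_iff]; intro h; have := Nat.le_of_ble_eq_true h; omega
  have h3 : (x + 41 * i - 22) % 41 = (x - 22) % 41 := by omega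
  simp only [wsCol, h1, h2, h3, cond_false]

theorem wsQ_add (x i : ℕ) (hx : 22 ≤ x) : wsQ (x + 41 * i) = wsQ x + i := by
  unfold wsQ; omega

theorem wsCheck1 : ((List.range 63).all fun x => (List.range 104).all fun y =>
    Nat.beq x 0 || Nat.beq y 0 || Nat.beq x y || Nat.beq (wsCol x) 3 ||
    !(Nat.beq (wsCol x) (wsCol y)) || !(Nat.beq (wsCol x) (wsCol (x + y)))) = true := by
  decide +kernel

theorem wsCheck2 : ((List.range 63).all fun x => (List.range 63).all fun y =>
    !(Nat.beq (wsCol x) 3) || !(Nat.beq (wsCol y) 3) || !(Nat.beq (wsCol (x + y)) 3)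
     || Nat.beq (wsQ (x + y)) (wsQ x + wsQ y)) = true := by
  decide +kernel

theorem wsCheck3 : ((List.range 63).all fun x => Nat.ble (wsCol x) 3 &&
    (!(Nat.beq (wsCol x) 3) || Nat.ble 22 x)) = true := by
  decide +kernel

theorem ws_red (x : ℕ) (hx : 1 ≤ x) :
    ∃ x' i, x = x' + 41 * i ∧ 1 ≤ x' ∧ x' ≤ 62 ∧ (i = 0 ∨ 22 ≤ x') := by
  by_cases h : x ≤ 21
  · exact ⟨x, 0, by omega, hx, by omega, Or.inl rfl⟩
  · exact ⟨22 + (x - 22) % 41, (x - 22) / 41, by omega, by omega, by omega, by omega⟩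

theorem wsCol_add' (x i : ℕ) (h : i = 0 ∨ 22 ≤ x) : wsCol (x + 41 * i) = wsCol x := by
  rcases h with rfl | h
  · simp
  · exact wsCol_add x i h

theorem wsCol_props (x : ℕ) (hx : 1 ≤ x) : wsCol x ≤ 3 ∧ (wsCol x = 3 → 22 ≤ x) := by
  obtain ⟨x', i, rfl, h1, h2, h3⟩ := ws_red x hx
  rw [wsCol_add' _ _ h3]
  have := wsCheck3
  simp only [List.all_eq_true, List.mem_range] at this
  have := this x' (by omega)
  simp only [Bool.and_eq_true, Bool.or_eq_true, Nat.ble_eq, Bool.not_eq_true',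
    ws_beq, ← Bool.not_eq_true] at this
  refine ⟨this.1, fun h => ?_⟩
  rcases this.2 with h' | h'
  · exact absurd h h'
  · omega

theorem wsC1 (x y : ℕ) (hx : 1 ≤ x) (hx' : x ≤ 62) (hy : 1 ≤ y) (hy' : y ≤ 103) (hne : x ≠ y)
    (h3 : wsCol x ≠ 3) (h1 : wsCol x = wsCol y) (h2 : wsCol x = wsCol (x + y)) : False := by
  have hk := wsCheck1
  simp only [List.all_eq_true, List.mem_range] at hk
  have := hk x (by omega) y (by omega)
  clear hk
  simp only [Bool.or_eq_true, Bool.not_eq_true', ws_beq, ← Bool.not_eq_true] at this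
  have a1 : x ≠ 0 := by omega
  have a2 : y ≠ 0 := by omega
  tauto

theorem wsC2 (x y : ℕ) (hx' : x ≤ 62) (hy' : y ≤ 62)
    (h1 : wsCol x = 3) (h2 : wsCol y = 3) (h3 : wsCol (x + y) = 3) :
    wsQ (x + y) = wsQ x + wsQ y := by
  have := wsCheck2
  simp only [List.all_eq_true, List.mem_range] at this
  have := this x (by omega) y (by omega)
  simp only [Bool.or_eq_true, Bool.not_eq_true', ws_beq, ← Bool.not_eq_true] at this
  tauto

theorem ws_sum1 (x y : ℕ) (hx : 1 ≤ x) (hy : 1 ≤ y) (hne : x ≠ y)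
    (h3 : wsCol x ≠ 3) (h1 : wsCol x = wsCol y) (h2 : wsCol x = wsCol (x + y)) : False := by
  obtain ⟨x', i, rfl, a1, a2, a3⟩ := ws_red x hx
  obtain ⟨y', j, rfl, b1, b2, b3⟩ := ws_red y hy
  have e : x' + 41 * i + (y' + 41 * j) = (x' + y') + 41 * (i + j) := by ring
  rw [e, wsCol_add' _ _ a3, wsCol_add' _ _ (by omega)] at h2
  rw [wsCol_add' _ _ a3, wsCol_add' _ _ b3] at h1
  rw [wsCol_add' _ _ a3] at h3
  by_cases hh : x' = y'
  · subst hh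
    have h22 : 22 ≤ x' := by
      by_contra hc
      apply hne; omega
    refine wsC1 x' (x' + 41 * 1) a1 a2 (by omega) (by omega) (by omega) h3 ?_ ?_
    · rw [wsCol_add _ _ h22]
    · rw [← add_assoc, wsCol_add _ _ (by omega)]; exact h2
  · exact wsC1 x' y' a1 a2 b1 (by omega) hh h3 h1 h2

theorem ws_sum2 (x y : ℕ) (hx : 1 ≤ x) (hy : 1 ≤ y)
    (h1 : wsCol x = 3) (h2 : wsCol y = 3) (h3 : wsCol (x + y) = 3) :
    wsQ (x + y) = wsQ x + wsQ y := by
  obtain ⟨x', i, rfl, a1, a2, a3⟩ := ws_red x hx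
  obtain ⟨y', j, rfl, b1, b2, b3⟩ := ws_red y hy
  have e : x' + 41 * i + (y' + 41 * j) = (x' + y') + 41 * (i + j) := by ring
  rw [e, wsCol_add' _ _ (by omega)] at h3
  rw [wsCol_add' _ _ a3] at h1
  rw [wsCol_add' _ _ b3] at h2
  have c1 := (wsCol_props x' a1).2 h1
  have c2 := (wsCol_props y' b1).2 h2
  rw [e, wsQ_add _ _ (by omega), wsQ_add _ _ c1, wsQ_add _ _ c2, wsC2 x' y' a2 b2 h1 h2 h3]
  ring

theorem ws_schur (k : ℕ) : ∃ g : ℕ → ℕ, (∀ x, 1 ≤ x → x ≤ wsS k → g x < k) ∧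
    (∀ x y, 1 ≤ x → 1 ≤ y → x + y ≤ wsS k → g x = g y → g x = g (x + y) → False) ∧
    (∀ i < k, ∃ x, 1 ≤ x ∧ x ≤ wsS k ∧ g x = i) := by
  induction k with
  | zero => exact ⟨fun _ => 0, by simp [wsS]; omega, by simp [wsS]; omega, by simp⟩
  | succ k ih =>
    obtain ⟨g, g1, g2, g3⟩ := ih
    generalize hS : wsS k = S at *
    have hS' : wsS (k + 1) = 3 * S + 1 := by simp [wsS, hS]
    rw [hS']
    let f : ℕ → ℕ := fun x => if x ≤ S then g x else if x ≤ 2 * S + 1 then k else g (x - (2 * S + 1))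
    have f1 : ∀ x, x ≤ S → f x = g x := fun x h => by simp [f, h]
    have f2 : ∀ x, S < x → x ≤ 2 * S + 1 → f x = k := fun x h h' => by
      simp [f, h', Nat.not_le.2 h]
    have f3 : ∀ x, 2 * S + 1 < x → f x = g (x - (2 * S + 1)) := fun x h => by
      have : ¬ x ≤ S := by omega
      simp [f, this, Nat.not_le.2 h]
    refine ⟨f, ?_, ?_, ?_⟩
    · intro x hx hx'
      rcases Nat.lt_or_ge S x with h | h
      · rcases Nat.lt_or_ge (2 * S + 1) x with h' | h'
        · rw [f3 x h']; have := g1 (x - (2 * S + 1)) (by omega) (by omega); omega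
        · rw [f2 x h h']; omega
      · rw [f1 x h]; have := g1 x hx h; omega
    · have key : ∀ x y, 1 ≤ x → x ≤ y → x + y ≤ 3 * S + 1 → f x = f y → f x = f (x + y) → False := by
        intro x y hx hxy hs e1 e2
        rcases Nat.lt_or_ge S x with h | h
        · rw [f2 x h (by omega), f3 (x + y) (by omega)] at e2
          have := g1 (x + y - (2 * S + 1)) (by omega) (by omega); omega
        · have hgx := g1 x hx h
          rw [f1 x h] at e1 e2
          rcases Nat.lt_or_ge S y with h1 | h1
          · rcases Nat.lt_or_ge (2 * S + 1) y with h2 | h2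
            · rw [f3 y h2] at e1
              rw [f3 (x + y) (by omega)] at e2
              have e : x + y - (2 * S + 1) = x + (y - (2 * S + 1)) := by omega
              rw [e] at e2
              exact g2 x (y - (2 * S + 1)) hx (by omega) (by omega) e1 e2
            · rw [f2 y h1 h2] at e1; omega
          · rw [f1 y h1] at e1
            rcases Nat.lt_or_ge S (x + y) with h2 | h2
            · rw [f2 (x + y) h2 (by omega)] at e2; omega
            · rw [f1 _ h2] at e2
              exact g2 x y hx (by omega) h2 e1 e2
      intro x y hx hy hs e1 e2
      rcases le_total x y with h | h
      · exact key x y hx h hs e1 e2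
      · exact key y x hy h (by omega) e1.symm (by rw [add_comm y x, ← e1]; exact e2)
    · intro i hi
      rcases Nat.lt_or_ge i k with h | h
      · obtain ⟨x, hx, hx', e⟩ := g3 i h
        exact ⟨x, hx, by omega, by rw [f1 x hx', e]⟩
      · exact ⟨S + 1, by omega, by omega, by rw [f2 _ (by omega) (by omega)]; omega⟩

theorem ws_main (k : ℕ) :
    ∃ P : Fin (k + 3) → Finset ℕ, IsWeakSchurPartition (k + 3) (41 * wsS k + 21) P := by
  obtain ⟨g, g1, g2, g3⟩ := ws_schur k
  generalize wsS k = S at *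
  let f : ℕ → ℕ := fun x => if wsCol x = 3 then 3 + g (wsQ x) else wsCol x
  have fa : ∀ x, wsCol x = 3 → f x = 3 + g (wsQ x) := fun x h => by simp [f, h]
  have fb : ∀ x, wsCol x ≠ 3 → f x = wsCol x := fun x h => by simp [f, h]
  refine ⟨fun i => (Finset.Icc 1 (41 * S + 21)).filter (fun x => f x = i), ?_, ?_, ?_, ?_⟩
  · rintro ⟨i, hi⟩
    have main : ∃ x, 1 ≤ x ∧ x ≤ 41 * S + 21 ∧ f x = i := by
      rcases Nat.lt_or_ge i 3 with h | h
      · interval_cases i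
        · exact ⟨1, by omega, by omega, rfl⟩
        · exact ⟨3, by omega, by omega, rfl⟩
        · exact ⟨9, by omega, by omega, rfl⟩
      · obtain ⟨j, hj, hj', e⟩ := g3 (i - 3) (by omega)
        refine ⟨22 + 41 * (j - 1), by omega, by omega, ?_⟩
        rw [fa _ (by rw [wsCol_add _ _ le_rfl]; rfl), wsQ_add _ _ le_rfl]
        have : wsQ 22 + (j - 1) = j := by simp [wsQ]; omega
        rw [this, e]; omega
    obtain ⟨x, h1, h2, h3⟩ := main
    exact ⟨x, by simp [h1, h2, h3]⟩
  · intro i j hij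
    rw [Finset.disjoint_left]
    intro x hx hx'
    simp only [Finset.mem_filter] at hx hx'
    exact hij (Fin.ext (hx.2.symm.trans hx'.2))
  · ext x
    simp only [Finset.mem_biUnion, Finset.mem_univ, true_and, Finset.mem_filter]
    constructor
    · rintro ⟨i, h, _⟩; exact h
    · intro h
      have h' := Finset.mem_Icc.1 h
      have hp := wsCol_props x h'.1
      have hlt : f x < k + 3 := by
        by_cases hc : wsCol x = 3
        · rw [fa x hc]
          have h22 := hp.2 hc
          have := g1 (wsQ x) (by unfold wsQ; omega) (by unfold wsQ; omega)
          omega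
        · rw [fb x hc]; omega
      exact ⟨⟨f x, hlt⟩, h, rfl⟩
  · intro i a ha b hb c hc hab _ _ habc
    subst habc
    simp only [Finset.mem_filter, Finset.mem_Icc] at ha hb hc
    obtain ⟨⟨a1, _⟩, a2⟩ := ha
    obtain ⟨⟨b1, _⟩, b2⟩ := hb
    obtain ⟨⟨c1, c3⟩, c2⟩ := hc
    have pa := wsCol_props a a1
    have pb := wsCol_props b b1
    have pc := wsCol_props (a + b) c1
    by_cases h : wsCol a = 3
    · rw [fa _ h] at a2
      have hb3 : wsCol b = 3 := by
        by_contra hh; rw [fb _ hh] at b2; omega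
      have hc3 : wsCol (a + b) = 3 := by
        by_contra hh; rw [fb _ hh] at c2; omega
      rw [fa _ hb3] at b2
      rw [fa _ hc3] at c2
      have hq := ws_sum2 a b a1 b1 h hb3 hc3
      have h22 := pc.2 hc3
      have hle : wsQ (a + b) ≤ S := by unfold wsQ; omega
      rw [hq] at c2 hle
      exact g2 (wsQ a) (wsQ b) (by unfold wsQ; omega) (by unfold wsQ; omega) hle
        (by omega) (by omega)
    · rw [fb _ h] at a2
      have hb3 : wsCol b ≠ 3 := by
        intro hh; rw [fa _ hh] at b2; omega
      have hc3 : wsCol (a + b) ≠ 3 := by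
        intro hh; rw [fa _ hh] at c2; omega
      rw [fb _ hb3] at b2
      rw [fb _ hc3] at c2
      exact ws_sum1 a b a1 b1 hab h (by omega) (by omega)

theorem stmt11 (n : ℕ → ℕ) (h3 : n 3 = 21)
    (hrec : ∀ s, 3 ≤ s → n (s + 1) = 3 * n s - 1) :
    ∀ s, 3 ≤ s → ∃ P : Fin s → Finset ℕ, IsWeakSchurPartition s (n s) P := by
  have hn : ∀ k, n (k + 3) = 41 * wsS k + 21 := by
    intro k
    induction k with
    | zero => simpa [wsS] using h3
    | succ k ih =>
      have := hrec (k + 3) (by omega)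
      have e : k + 1 + 3 = k + 3 + 1 := by omega
      rw [e, this, ih]
      simp only [wsS]
      omega
  intro s hs
  obtain ⟨k, rfl⟩ : ∃ k, s = k + 3 := ⟨s - 3, by omega⟩
  rw [hn]
  exact ws_main k
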